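/- Let Θ be a nonempty finite type and let m₁, …, m_k (k ≥ 2) be basic belief assignments on Θ. Suppose U₁, …, U_u ⊆ Θ (u ≥ 1) are nonempty proper subsets of Θ (partial ignorances) that are pairwise disjoint, and there is a distinguished index j₀ such that: (i) every focal element of every mᵢ is either a singleton or one of the U_j; (ii) mᵢ(U_{j₀}) > 0 for every index i; (iii) for every θ ∈ Θ there exists an index i with mᵢ({θ}) = 0, and for every j ≠ j₀ there exists an index i with mᵢ(U_j) = 0; (iv) mᵢ({θ}) = 0 for every index i and every θ belonging to some U_j. Then the degree of conflict is K = 1 − ∏ᵢ mᵢ(U_{j₀}) < 1, and the Dempster combination satisfies (m₁ ⊕ ⋯ ⊕ m_k)(U_{j₀}) = 1 and (m₁ ⊕ ⋯ ⊕ m_k)(B) = 0 for every other subset B. -/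

import Mathlib

/-!
The product masses `∏ i, m i (X i)` over all `k`-tuples of subsets sum to `1`. A tuple of focal
elements with a common point `θ` must be the constant tuple `U j₀`: if one entry is some `U j`,
then no entry is `{θ}`, because points of `U j` carry no singleton mass, so by disjointness every
entry is `U j`, and `j = j₀` because otherwise some source gives `U j` no mass; if all entries are
singletons, they all equal `{θ}`, to which some source gives no mass. This is
`tuple_eq_of_common_point`. Hence the only non-conflicting product mass is `∏ i, m i (U j₀)`, which
gives the degree of conflict, and after normalization all of the combined mass lies on `U j₀`.
-/

open Finset

/-- A basic belief assignment on a finite frame `Θ`. -/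
def IsBBA {Θ : Type*} [Fintype Θ] [DecidableEq Θ] (m : Finset Θ → ℝ) : Prop :=
  m ∅ = 0 ∧ (∀ A : Finset Θ, 0 ≤ m A) ∧ (∑ A : Finset Θ, m A) = 1

/-- Degree of conflict of `k` sources. -/
noncomputable def conflict {Θ : Type*} [Fintype Θ] [DecidableEq Θ] (k : ℕ)
    (m : Fin k → Finset Θ → ℝ) : ℝ :=
  ∑ X ∈ Finset.univ.filter (fun X : Fin k → Finset Θ => Finset.univ.inf X = ∅),
    ∏ i, m i (X i)

/-- Dempster's rule of combination of `k` sources. -/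
noncomputable def dempster {Θ : Type*} [Fintype Θ] [DecidableEq Θ] (k : ℕ)
    (m : Fin k → Finset Θ → ℝ) (B : Finset Θ) : ℝ :=
  if B = ∅ then 0 else
    (∑ X ∈ Finset.univ.filter (fun X : Fin k → Finset Θ => Finset.univ.inf X = B),
      ∏ i, m i (X i)) / (1 - conflict k m)

theorem sum_prod_eq_one {Θ : Type*} [Fintype Θ] [DecidableEq Θ] {k : ℕ}
    {m : Fin k → Finset Θ → ℝ} (hbba : ∀ i, IsBBA (m i)) :
    ∑ X : Fin k → Finset Θ, ∏ i, m i (X i) = 1 := by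
  rw [← Fintype.prod_sum]
  exact Finset.prod_eq_one fun i _ => (hbba i).2.2

theorem tuple_eq_of_common_point {Θ : Type*} {k u : ℕ} [DecidableEq Θ]
    {m : Fin k → Finset Θ → ℝ} {U : Fin u → Finset Θ} {j₀ : Fin u}
    (hUdisj : ∀ j j', j ≠ j' → U j ∩ U j' = ∅)
    (hfocal : ∀ i (A : Finset Θ), 0 < m i A → (∃ θ : Θ, A = {θ}) ∨ ∃ j, A = U j)
    (hcol : ∀ θ : Θ, ∃ i, m i {θ} = 0)
    (hUcol : ∀ j, j ≠ j₀ → ∃ i, m i (U j) = 0)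
    (hUzero : ∀ i, ∀ θ : Θ, (∃ j, θ ∈ U j) → m i {θ} = 0)
    {X : Fin k → Finset Θ} (hX : ∀ i, 0 < m i (X i)) {θ : Θ} (hθ : ∀ i, θ ∈ X i) :
    X = fun _ => U j₀ := by
  -- An entry containing `θ` is either `{θ}` itself or one of the `U j`.
  have hcase : ∀ i, X i = {θ} ∨ ∃ j, X i = U j := by
    intro i
    rcases hfocal i (X i) (hX i) with ⟨t, ht⟩ | h
    · left
      have := hθ i
      rw [ht, Finset.mem_singleton] at this
      rw [ht, this]
    · exact Or.inr h
  by_cases hU : ∃ j, θ ∈ U j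
  · obtain ⟨j, hj⟩ := hU
    have hconst : ∀ i, X i = U j := by
      intro i
      rcases hcase i with h | ⟨j', h⟩
      · have := hX i
        rw [h, hUzero i θ ⟨j, hj⟩] at this
        exact absurd this (lt_irrefl 0)
      · by_cases hjj : j' = j
        · rw [h, hjj]
        · have hmem : θ ∈ U j' ∩ U j := Finset.mem_inter.2 ⟨h ▸ hθ i, hj⟩
          rw [hUdisj j' j hjj] at hmem
          exact absurd hmem (Finset.notMem_empty θ)
    by_cases hjj : j = j₀
    · funext i
      rw [hconst i, hjj]
    · obtain ⟨i, hi⟩ := hUcol j hjj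
      exact absurd hi (hconst i ▸ hX i).ne'
  · obtain ⟨i, hi⟩ := hcol θ
    rcases hcase i with h | ⟨j, h⟩
    · exact absurd hi (h ▸ hX i).ne'
    · exact absurd ⟨j, h ▸ hθ i⟩ hU

theorem several_uncertainties_dempster_total_ignorance
    {Θ : Type*} [Fintype Θ] [DecidableEq Θ] [Nonempty Θ]
    (k : ℕ) (hk : 2 ≤ k) (m : Fin k → Finset Θ → ℝ)
    (hbba : ∀ i, IsBBA (m i))
    (u : ℕ) (hu : 1 ≤ u) (U : Fin u → Finset Θ)
    (hUne : ∀ j, (U j).Nonempty) (hUproper : ∀ j, U j ≠ Finset.univ)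
    (hUdisj : ∀ j j', j ≠ j' → U j ∩ U j' = ∅)
    (j₀ : Fin u)
    (hfocal : ∀ i (A : Finset Θ), 0 < m i A → (∃ θ : Θ, A = {θ}) ∨ ∃ j, A = U j)
    (hj₀pos : ∀ i, 0 < m i (U j₀))
    (hcol : ∀ θ : Θ, ∃ i, m i {θ} = 0)
    (hUcol : ∀ j, j ≠ j₀ → ∃ i, m i (U j) = 0)
    (hUzero : ∀ i, ∀ θ : Θ, (∃ j, θ ∈ U j) → m i {θ} = 0) :
    conflict k m = 1 - ∏ i, m i (U j₀) ∧
    conflict k m < 1 ∧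
    dempster k m (U j₀) = 1 ∧
    ∀ B : Finset Θ, B ≠ U j₀ → dempster k m B = 0 := by
  have hinf : Finset.univ.inf (fun _ : Fin k => U j₀) = U j₀ :=
    Finset.inf_const ⟨⟨0, by omega⟩, Finset.mem_univ _⟩ _
  have hzero : ∀ X : Fin k → Finset Θ, Finset.univ.inf X ≠ ∅ → X ≠ (fun _ => U j₀) →
      ∏ i, m i (X i) = 0 := by
    intro X hne hXne
    by_contra hprod
    obtain ⟨θ, hθ⟩ := Finset.nonempty_iff_ne_empty.2 hne
    refine hXne (tuple_eq_of_common_point hUdisj hfocal hcol hUcol hUzero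
      (fun i => lt_of_le_of_ne ((hbba i).2.1 _) fun h =>
        hprod (Finset.prod_eq_zero (Finset.mem_univ i) h.symm))
      (fun i => (Finset.inf_le (Finset.mem_univ i) : Finset.univ.inf X ≤ X i) hθ))
  have hpos : 0 < ∏ i, m i (U j₀) := Finset.prod_pos fun i _ => hj₀pos i
  have hK : conflict k m = 1 - ∏ i, m i (U j₀) := by
    have hsplit := Finset.sum_filter_add_sum_filter_not Finset.univ
      (fun X : Fin k → Finset Θ => Finset.univ.inf X = ∅) (fun X => ∏ i, m i (X i))
    have hrest : ∑ X ∈ Finset.univ.filter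
        (fun X : Fin k → Finset Θ => ¬ Finset.univ.inf X = ∅), ∏ i, m i (X i)
          = ∏ i, m i (U j₀) := by
      refine Finset.sum_eq_single_of_mem (fun _ => U j₀) ?_ ?_
      · rw [Finset.mem_filter, hinf]
        exact ⟨Finset.mem_univ _, (hUne j₀).ne_empty⟩
      · intro X hX hXne
        exact hzero X (Finset.mem_filter.1 hX).2 hXne
    rw [sum_prod_eq_one hbba, hrest] at hsplit
    unfold conflict
    linarith
  refine ⟨hK, by linarith, ?_, ?_⟩
  · have hnum : ∑ X ∈ Finset.univ.filter
        (fun X : Fin k → Finset Θ => Finset.univ.inf X = U j₀), ∏ i, m i (X i)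
          = ∏ i, m i (U j₀) := by
      refine Finset.sum_eq_single_of_mem (fun _ => U j₀) ?_ ?_
      · rw [Finset.mem_filter]
        exact ⟨Finset.mem_univ _, hinf⟩
      · intro X hX hXne
        exact hzero X ((Finset.mem_filter.1 hX).2 ▸ (hUne j₀).ne_empty) hXne
    rw [dempster, if_neg (hUne j₀).ne_empty, hnum, hK, sub_sub_cancel, div_self hpos.ne']
  · intro B hB
    unfold dempster
    split_ifs with hBe
    · rfl
    · rw [Finset.sum_eq_zero, zero_div]
      intro X hX
      have hXB := (Finset.mem_filter.1 hX).2
      refine hzero X (hXB ▸ hBe) ?_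
      rintro rfl
      exact hB (hXB.symm.trans hinf)
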